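/- The rational map Φ: R^4 → R^4 defined by Φ(x_1, x_2, x_3, x_4) = (x_2, x_3, x_4, (1 - x_1 - x_3 + x_1 x_2 x_3)/(1 - x_1 - x_3 x_4)) satisfies Φ^{12} = id on the open set where all iterates are defined. -/

import Mathlib

/-- The map `Φ(x₁,x₂,x₃,x₄) = (x₂,x₃,x₄,(1-x₁-x₃+x₁x₂x₃)/(1-x₁-x₃x₄))`. -/
noncomputable def phi4Map (p : ℝ × ℝ × ℝ × ℝ) : ℝ × ℝ × ℝ × ℝ :=
  (p.2.1, p.2.2.1, p.2.2.2,
    (1 - p.1 - p.2.2.1 + p.1 * p.2.1 * p.2.2.1) / (1 - p.1 - p.2.2.1 * p.2.2.2))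

set_option linter.unusedSimpArgs false

/-- One step of the map, given the expected value of the denominator and of the new coordinate. -/
theorem phi_step {x y z w v e : ℝ} (he : e ≠ 0) (hd : 1 - x - z * w = e)
    (hn : 1 - x - z + x * y * z = v * e) : phi4Map (x, y, z, w) = (y, z, w, v) := by
  simp only [phi4Map, hd, hn]
  rw [mul_div_cancel_right₀ _ he]

/-- The rational map `Φ` is 12-periodic wherever all iterates are defined. -/
theorem stmt6 (p : ℝ × ℝ × ℝ × ℝ)
    (hdef : ∀ m < 12,
      1 - (phi4Map^[m] p).1 - (phi4Map^[m] p).2.2.1 * (phi4Map^[m] p).2.2.2 ≠ 0) :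
    phi4Map^[12] p = p := by
  obtain ⟨a, b, c, d⟩ := p
  obtain ⟨q8, h8⟩ : ∃ q : ℝ, q = 1-a-c*d := ⟨_, rfl⟩
  obtain ⟨q9, h9⟩ : ∃ q : ℝ, q = 1-a-c+a*b*c := ⟨_, rfl⟩
  obtain ⟨q10, h10⟩ : ∃ q : ℝ, q = 1-b-d+b*c*d := ⟨_, rfl⟩
  obtain ⟨q11, h11⟩ : ∃ q : ℝ, q = 1-d-a*b := ⟨_, rfl⟩
  have s0 : phi4Map^[0] (a, b, c, d) = (a, b, c, d) := rfl
  have e0 := hdef 0 (by norm_num)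
  rw [s0] at e0
  simp only at e0
  have g0 : 1 - a - c * (d) = q8 := by
    rw [h8]
  rw [g0] at e0
  have f8 : q8 ≠ 0 := by
    intro h
    apply e0
    simp [h]
  have s1 : phi4Map^[1] (a, b, c, d) = (b, c, d, q9/(q8)) := by
    rw [Function.iterate_succ_apply', s0]
    apply phi_step e0 g0
    field_simp
    try simp only [h8, h9, h10, h11]
    try ring
  have e1 := hdef 1 (by norm_num)
  rw [s1] at e1
  simp only at e1
  have g1 : 1 - b - d * (q9/(q8)) = (1-a)*q10/(q8) := by
    field_simp
    simp only [h8, h9, h10, h11]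
    ring
  rw [g1] at e1
  have f4 : (1-a) ≠ 0 := by
    intro h
    apply e1
    simp [h]
  have f10 : q10 ≠ 0 := by
    intro h
    apply e1
    simp [h]
  have s2 : phi4Map^[2] (a, b, c, d) = (c, d, q9/(q8), q8/((1-a))) := by
    rw [Function.iterate_succ_apply', s1]
    apply phi_step e1 g1
    field_simp
    try simp only [h8, h9, h10, h11]
    try ring
  have e2 := hdef 2 (by norm_num)
  rw [s2] at e2
  simp only at e2
  have g2 : 1 - c - q9/(q8) * (q8/((1-a))) = a*c*(1-b)/((1-a)) := by
    field_simp
    simp only [h8, h9, h10, h11]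
    ring
  rw [g2] at e2
  have f0 : a ≠ 0 := by
    intro h
    apply e2
    simp [h]
  have f2 : c ≠ 0 := by
    intro h
    apply e2
    simp [h]
  have f5 : (1-b) ≠ 0 := by
    intro h
    apply e2
    simp [h]
  have s3 : phi4Map^[3] (a, b, c, d) = (d, q9/(q8), q8/((1-a)), (1-a)*q10/((1-b)*q8)) := by
    rw [Function.iterate_succ_apply', s2]
    apply phi_step e2 g2
    field_simp
    try simp only [h8, h9, h10, h11]
    try ring
  have e3 := hdef 3 (by norm_num)
  rw [s3] at e3
  simp only at e3
  have g3 : 1 - d - q8/((1-a)) * ((1-a)*q10/((1-b)*q8)) = b*d*(1-c)/((1-b)) := by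
    field_simp
    simp only [h8, h9, h10, h11]
    ring
  rw [g3] at e3
  have f1 : b ≠ 0 := by
    intro h
    apply e3
    simp [h]
  have f3 : d ≠ 0 := by
    intro h
    apply e3
    simp [h]
  have f6 : (1-c) ≠ 0 := by
    intro h
    apply e3
    simp [h]
  have s4 : phi4Map^[4] (a, b, c, d) = (q9/(q8), q8/((1-a)), (1-a)*q10/((1-b)*q8), a*c*(1-b)/((1-a)*(1-c))) := by
    rw [Function.iterate_succ_apply', s3]
    apply phi_step e3 g3
    field_simp
    try simp only [h8, h9, h10, h11]
    try ring
  have e4 := hdef 4 (by norm_num)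
  rw [s4] at e4
  simp only at e4
  have g4 : 1 - q9/(q8) - (1-a)*q10/((1-b)*q8) * (a*c*(1-b)/((1-a)*(1-c))) = c*(1-d)*q9/((1-c)*q8) := by
    field_simp
    simp only [h8, h9, h10, h11]
    ring
  rw [g4] at e4
  have f7 : (1-d) ≠ 0 := by
    intro h
    apply e4
    simp [h]
  have f9 : q9 ≠ 0 := by
    intro h
    apply e4
    simp [h]
  have s5 : phi4Map^[5] (a, b, c, d) = (q8/((1-a)), (1-a)*q10/((1-b)*q8), a*c*(1-b)/((1-a)*(1-c)), b*d*(1-c)/((1-b)*(1-d))) := by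
    rw [Function.iterate_succ_apply', s4]
    apply phi_step e4 g4
    field_simp
    try simp only [h8, h9, h10, h11]
    try ring
  have e5 := hdef 5 (by norm_num)
  rw [s5] at e5
  simp only at e5
  have g5 : 1 - q8/((1-a)) - a*c*(1-b)/((1-a)*(1-c)) * (b*d*(1-c)/((1-b)*(1-d))) = c*d*q11/((1-a)*(1-d)) := by
    field_simp
    simp only [h8, h9, h10, h11]
    ring
  rw [g5] at e5
  have f11 : q11 ≠ 0 := by
    intro h
    apply e5
    simp [h]
  have s6 : phi4Map^[6] (a, b, c, d) = ((1-a)*q10/((1-b)*q8), a*c*(1-b)/((1-a)*(1-c)), b*d*(1-c)/((1-b)*(1-d)), (1-d)*q9/((1-c)*q11)) := by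
    rw [Function.iterate_succ_apply', s5]
    apply phi_step e5 g5
    field_simp
    try simp only [h8, h9, h10, h11]
    try ring
  have e6 := hdef 6 (by norm_num)
  rw [s6] at e6
  simp only at e6
  have g6 : 1 - (1-a)*q10/((1-b)*q8) - b*d*(1-c)/((1-b)*(1-d)) * ((1-d)*q9/((1-c)*q11)) = d*q9*q10/((1-b)*q8*q11) := by
    field_simp
    simp only [h8, h9, h10, h11]
    ring
  rw [g6] at e6
  have s7 : phi4Map^[7] (a, b, c, d) = (a*c*(1-b)/((1-a)*(1-c)), b*d*(1-c)/((1-b)*(1-d)), (1-d)*q9/((1-c)*q11), q11/((1-d))) := by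
    rw [Function.iterate_succ_apply', s6]
    apply phi_step e6 g6
    field_simp
    try simp only [h8, h9, h10, h11]
    try ring
  have e7 := hdef 7 (by norm_num)
  rw [s7] at e7
  simp only at e7
  have g7 : 1 - a*c*(1-b)/((1-a)*(1-c)) - (1-d)*q9/((1-c)*q11) * (q11/((1-d))) = a*q9/((1-a)*(1-c)) := by
    field_simp
    simp only [h8, h9, h10, h11]
    ring
  rw [g7] at e7
  have s8 : phi4Map^[8] (a, b, c, d) = (b*d*(1-c)/((1-b)*(1-d)), (1-d)*q9/((1-c)*q11), q11/((1-d)), q10/(q11)) := by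
    rw [Function.iterate_succ_apply', s7]
    apply phi_step e7 g7
    field_simp
    try simp only [h8, h9, h10, h11]
    try ring
  have e8 := hdef 8 (by norm_num)
  rw [s8] at e8
  simp only at e8
  have g8 : 1 - b*d*(1-c)/((1-b)*(1-d)) - q11/((1-d)) * (q10/(q11)) = b*q10/((1-b)*(1-d)) := by
    field_simp
    simp only [h8, h9, h10, h11]
    ring
  rw [g8] at e8
  have s9 : phi4Map^[9] (a, b, c, d) = ((1-d)*q9/((1-c)*q11), q11/((1-d)), q10/(q11), a) := by
    rw [Function.iterate_succ_apply', s8]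
    apply phi_step e8 g8
    field_simp
    try simp only [h8, h9, h10, h11]
    try ring
  have e9 := hdef 9 (by norm_num)
  rw [s9] at e9
  simp only at e9
  have g9 : 1 - (1-d)*q9/((1-c)*q11) - q10/(q11) * (a) = a*c*q10/((1-c)*q11) := by
    field_simp
    simp only [h8, h9, h10, h11]
    ring
  rw [g9] at e9
  have s10 : phi4Map^[10] (a, b, c, d) = (q11/((1-d)), q10/(q11), a, b) := by
    rw [Function.iterate_succ_apply', s9]
    apply phi_step e9 g9
    field_simp
    try simp only [h8, h9, h10, h11]
    try ring
  have e10 := hdef 10 (by norm_num)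
  rw [s10] at e10
  simp only at e10
  have g10 : 1 - q11/((1-d)) - a * (b) = a*b*d/((1-d)) := by
    field_simp
    simp only [h8, h9, h10, h11]
    ring
  rw [g10] at e10
  have s11 : phi4Map^[11] (a, b, c, d) = (q10/(q11), a, b, c) := by
    rw [Function.iterate_succ_apply', s10]
    apply phi_step e10 g10
    field_simp
    try simp only [h8, h9, h10, h11]
    try ring
  have e11 := hdef 11 (by norm_num)
  rw [s11] at e11
  simp only at e11
  have g11 : 1 - q10/(q11) - b * (c) = b*q9/(q11) := by
    field_simp
    simp only [h8, h9, h10, h11]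
    ring
  rw [g11] at e11
  have s12 : phi4Map^[12] (a, b, c, d) = (a, b, c, d) := by
    rw [Function.iterate_succ_apply', s11]
    apply phi_step e11 g11
    field_simp
    try simp only [h8, h9, h10, h11]
    try ring
  exact s12
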